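/- Let n ≥ 2, ω = exp(2πi/n), let Aₙ ∈ Mₙ(ℂ) be the diagonal matrix with (Aₙ)_{jj} = ω^j for j = 0,…,n−1, and let B̂ₙ be the cyclic shift matrix with (B̂ₙ)_{jk} = 1 if j ≡ k+1 (mod n) and 0 otherwise. Let A, B ∈ Mₙ(ℂ) be such that A is normal, the operator norm of B on Euclidean ℂⁿ equals 1, and {(x,y,z₁,z₂) ∈ ℂ⁴ : det(x·A + y·B + z₁·AB + z₂·BA − I) = 0} = {(x,y,z₁,z₂) ∈ ℂ⁴ : xⁿ + yⁿ + (−1)^{n−1}(ω z₁ + z₂)ⁿ = 1}. Then there exists a unitary U ∈ Mₙ(ℂ) such that U A Uᴴ = Aₙ and U B Uᴴ = B̂ₙ. -/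

import Mathlib

open Matrix Complex

noncomputable section

/-!
Slicing the joint spectrum along lines through the origin gives the spectra of single matrices: the
`x`- and `y`-axes show that every `n`-th root of unity is an eigenvalue of `A` and of `B`, so that
`Aⁿ = Bⁿ = 1` by Cayley–Hamilton. A normal matrix, or a contraction, of finite order is unitary.
A line `(z₁, z₂) = s (1, -μ)` with `μ ≠ ω` shows in the same way that `AB - μBA` is invertible, so
the unitary `AB(BA)ᴴ` has spectrum `{ω}`, and `AB = ωBA`. Applying powers of `B` to a unit
eigenvector of `A` of eigenvalue `1` then gives an orthonormal basis in which `A` and `B` are the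
clock and shift matrices.
-/

section CStarAlgebra

variable {𝔸 : Type*} [CStarAlgebra 𝔸]

theorem mem_unitary_of_isStarNormal_of_pow_eq_one {a : 𝔸} [IsStarNormal a] {n : ℕ} (hn : n ≠ 0)
    (ha : a ^ n = 1) : a ∈ unitary 𝔸 := by
  nontriviality 𝔸 using Subsingleton.elim a 1 ▸ one_mem (unitary 𝔸)
  refine mem_unitary_of_spectrum_subset_unitary fun μ hμ ↦ ?_
  have hμn : μ ^ n = 1 := by simpa [ha] using spectrum.pow_mem_pow a n hμ
  rw [SetLike.mem_coe, Unitary.mem_iff_star_mul_self, star_def, conj_mul',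
    norm_eq_one_of_pow_eq_one hμn hn, ofReal_one, one_pow]

theorem mem_unitary_of_mul_eq_one_of_norm_le_one {a b : 𝔸} (hab : a * b = 1) (hba : b * a = 1)
    (ha : ‖a‖ ≤ 1) (hb : ‖b‖ ≤ 1) : a ∈ unitary 𝔸 := by
  let _ := CStarAlgebra.spectralOrder 𝔸
  have _ := CStarAlgebra.spectralOrderedRing 𝔸
  have star_mul_le_one {c : 𝔸} (hc : ‖c‖ ≤ 1) : star c * c ≤ 1 :=
    (CStarAlgebra.norm_le_one_iff_of_nonneg _ (star_mul_self_nonneg c)).1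
      ((CStarRing.norm_star_mul_self (x := c)).trans_le (mul_le_one₀ hc (norm_nonneg c) hc))
  have one_le : 1 ≤ star a * a :=
    calc 1 = star (b * a) * (b * a) := by rw [hba, star_one, one_mul]
      _ = star a * (star b * b) * a := by simp only [star_mul, mul_assoc]
      _ ≤ star a * 1 * a := star_left_conjugate_le_conjugate (star_mul_le_one hb) a
      _ = star a * a := by rw [mul_one]
  have star_mul_self : star a * a = 1 := (star_mul_le_one ha).antisymm one_le
  have star_eq : star a = b := left_inv_eq_right_inv star_mul_self hab
  exact Unitary.mem_iff.2 ⟨star_mul_self, star_eq ▸ hab⟩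

theorem mem_unitary_of_norm_le_one_of_pow_eq_one {a : 𝔸} (ha : ‖a‖ ≤ 1) {n : ℕ} (hn : n ≠ 0)
    (ha_pow : a ^ n = 1) : a ∈ unitary 𝔸 := by
  nontriviality 𝔸 using Subsingleton.elim a 1 ▸ one_mem (unitary 𝔸)
  exact mem_unitary_of_mul_eq_one_of_norm_le_one (b := a ^ (n - 1))
    (by rw [mul_pow_sub_one hn, ha_pow]) (by rw [pow_sub_one_mul hn, ha_pow]) ha
    ((norm_pow_le a (n - 1)).trans (pow_le_one₀ (norm_nonneg a) ha))

theorem eq_smul_of_forall_ne_isUnit_sub_smul {a b : 𝔸} (ha : a ∈ unitary 𝔸) (hb : b ∈ unitary 𝔸)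
    {w : ℂ} (h : ∀ μ ≠ w, IsUnit (a - μ • b)) : a = w • b := by
  have h_spectrum : spectrum ℂ (a * star b) ⊆ {w} := by
    refine fun μ hμ ↦ of_not_not fun hμw ↦ hμ ?_
    have h_factor : algebraMap ℂ 𝔸 μ - a * star b = -((a - μ • b) * star b) := by
      rw [sub_mul, smul_mul_assoc, Unitary.mul_star_self_of_mem hb, Algebra.algebraMap_eq_smul_one,
        neg_sub]
    have h_star : IsUnit (star b) := Unitary.isUnit_coe (U := ⟨star b, Unitary.star_mem hb⟩)
    rw [spectrum.mem_resolventSet_iff, h_factor]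
    exact ((h μ hμw).mul h_star).neg
  have h_scalar : a * star b = algebraMap ℂ 𝔸 w :=
    CFC.eq_algebraMap_of_spectrum_subset_singleton _ w h_spectrum
      (isStarNormal_of_mem_unitary (mul_mem ha (Unitary.star_mem hb)))
  calc a = a * star b * b := by rw [mul_assoc, Unitary.star_mul_self_of_mem hb, mul_one]
    _ = w • b := by rw [h_scalar, Algebra.algebraMap_eq_smul_one, smul_one_mul]

theorem commute_star_mul_self_of_semiconjBy {a d v : 𝔸} (ha : IsStarNormal a) (hd : IsStarNormal d)
    (h : SemiconjBy v d a) : Commute (star v * v) d := by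
  -- By Fuglede–Putnam, `v` also intertwines the adjoints, so `star v` carries `a` back to `d`.
  have h_star : SemiconjBy (star v) a d := by
    simpa only [star_star] using (h.star_right hd ha).star_star_star
  exact h_star.mul_left h

end CStarAlgebra

section Spectrum

variable {ι K : Type*} [Fintype ι] [DecidableEq ι] [Field K]

theorem det_smul_sub_one_eq_zero_iff_inv_mem_spectrum {M : Matrix ι ι K} {s : K} (hs : s ≠ 0) :
    (s • M - 1).det = 0 ↔ s⁻¹ ∈ spectrum K M := by
  have h_smul : s • M - 1 = -s • (algebraMap K (Matrix ι ι K) s⁻¹ - M) := by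
    rw [Algebra.algebraMap_eq_smul_one, smul_sub, smul_smul, neg_mul, mul_inv_cancel₀ hs]
    module
  rw [h_smul, det_smul, mul_eq_zero_iff_left (pow_ne_zero _ (neg_ne_zero.2 hs)), spectrum.mem_iff,
    isUnit_iff_isUnit_det, isUnit_iff_ne_zero, not_not]

variable [IsAlgClosed K]

open Polynomial in
theorem charpoly_eq_X_pow_card_sub_C {M : Matrix ι ι K} {c : K}
    (h_card : (Fintype.card ι : K) ≠ 0) (hc : c ≠ 0)
    (h : ∀ μ, μ ^ Fintype.card ι = c → μ ∈ spectrum K M) :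
    M.charpoly = X ^ Fintype.card ι - C c := by
  have h_card' : Fintype.card ι ≠ 0 := ne_of_apply_ne (Nat.cast (R := K)) (by simpa)
  have h_monic : (X ^ Fintype.card ι - C c).Monic := monic_X_pow_sub_C c h_card'
  have h_dvd : X ^ Fintype.card ι - C c ∣ M.charpoly := by
    rw [IsAlgClosed.dvd_iff_roots_le_roots h_monic.ne_zero M.charpoly_monic.ne_zero,
      Multiset.le_iff_subset (nodup_roots (separable_X_pow_sub_C c h_card hc))]
    intro μ hμ
    rw [mem_roots M.charpoly_monic.ne_zero, ← mem_spectrum_iff_isRoot_charpoly]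
    exact h μ (by simpa [sub_eq_zero] using isRoot_of_mem_roots hμ)
  refine eq_of_monic_of_dvd_of_natDegree_le h_monic M.charpoly_monic h_dvd ?_
  rw [M.charpoly_natDegree_eq_dim, natDegree_X_pow_sub_C]

theorem pow_card_eq_smul_one_of_det_smul_sub_one_eq_zero {M : Matrix ι ι K} {c : K}
    (h_card : (Fintype.card ι : K) ≠ 0) (hc : c ≠ 0)
    (h : ∀ s : K, c * s ^ Fintype.card ι = 1 → (s • M - 1).det = 0) :
    M ^ Fintype.card ι = c • (1 : Matrix ι ι K) := by
  have h_spectrum (μ : K) (hμ : μ ^ Fintype.card ι = c) : μ ∈ spectrum K M := by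
    have hμ0 : μ ≠ 0 := by
      rintro rfl
      exact hc (hμ ▸ zero_pow (ne_of_apply_ne (Nat.cast (R := K)) (by simpa)))
    have h_det := h μ⁻¹ (by rw [inv_pow, hμ, mul_inv_cancel₀ hc])
    rwa [det_smul_sub_one_eq_zero_iff_inv_mem_spectrum (inv_ne_zero hμ0), inv_inv] at h_det
  have h_aeval := M.aeval_self_charpoly
  rw [charpoly_eq_X_pow_card_sub_C h_card hc h_spectrum] at h_aeval
  simpa [sub_eq_zero, Algebra.algebraMap_eq_smul_one] using h_aeval

theorem isUnit_sub_smul_of_det_pencil_eq_zero {P Q : Matrix ι ι K} {ε ω μ : K}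
    (h_card : (Fintype.card ι : K) ≠ 0) (hε : ε ≠ 0)
    (h : ∀ z w : K, ε * (ω * z + w) ^ Fintype.card ι = 1 → (z • P + w • Q - 1).det = 0)
    (hμ : μ ≠ ω) : IsUnit (P - μ • Q) := by
  have hc : ε * (ω - μ) ^ Fintype.card ι ≠ 0 :=
    mul_ne_zero hε (pow_ne_zero _ (sub_ne_zero.2 hμ.symm))
  have h_pow : (P - μ • Q) ^ Fintype.card ι = (ε * (ω - μ) ^ Fintype.card ι) • 1 := by
    refine pow_card_eq_smul_one_of_det_smul_sub_one_eq_zero h_card hc fun s hs ↦ ?_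
    rw [show s • (P - μ • Q) = s • P + (-μ * s) • Q by module]
    refine h s (-μ * s) ?_
    rw [← hs, ← add_mul, ← sub_eq_add_neg, mul_pow, mul_assoc]
  rw [← isUnit_pow_iff (ne_of_apply_ne (Nat.cast (R := K)) (by simpa)), h_pow,
    ← Algebra.algebraMap_eq_smul_one]
  exact (isUnit_iff_ne_zero.2 hc).map _

end Spectrum

section Matrix

variable {ι : Type*} [Fintype ι] [DecidableEq ι]

theorem exists_unit_eigenvector_of_mem_spectrum {𝕜 : Type*} [RCLike 𝕜] {A : Matrix ι ι 𝕜} {μ : 𝕜}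
    (hμ : μ ∈ spectrum 𝕜 A) :
    ∃ u : ι → 𝕜, star u ⬝ᵥ u = 1 ∧ A *ᵥ u = μ • u := by
  rw [← spectrum_toLpLin 2, ← Module.End.hasEigenvalue_iff_mem_spectrum] at hμ
  obtain ⟨v, hv⟩ := hμ.exists_hasEigenvector
  refine ⟨((‖v‖⁻¹ : 𝕜) • v).ofLp, ?_, ?_⟩
  · rw [dotProduct_comm, ← EuclideanSpace.inner_eq_star_dotProduct, inner_self_eq_norm_sq_to_K,
      norm_smul_inv_norm hv.2, RCLike.ofReal_one, one_pow]
  · rw [WithLp.ofLp_smul, mulVec_smul, ← toLin'_apply, ← ofLp_toLpLin, hv.apply_eq_smul,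
      WithLp.ofLp_smul, smul_comm]

theorem star_mulVec_dotProduct_mulVec_of_mem_unitary {R : Type*} [Ring R] [StarRing R]
    {U : Matrix ι ι R} (hU : U ∈ unitary (Matrix ι ι R)) (x y : ι → R) :
    star (U *ᵥ x) ⬝ᵥ (U *ᵥ y) = star x ⬝ᵥ y := by
  rw [star_mulVec, ← dotProduct_mulVec, mulVec_mulVec, ← star_eq_conjTranspose,
    Unitary.star_mul_self_of_mem hU, one_mulVec]

theorem isDiag_of_commute_diagonal {R : Type*} [CommRing R] [NoZeroDivisors R]
    {M : Matrix ι ι R} {d : ι → R} (hd : d.Injective) (h : Commute M (diagonal d)) : M.IsDiag := by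
  intro i j hij
  have h_entry : M i j * (d j - d i) = 0 := by
    have := congr_fun₂ h.eq i j
    rw [mul_diagonal, diagonal_mul] at this
    linear_combination this
  exact (mul_eq_zero.1 h_entry).resolve_right (sub_ne_zero.2 (hd.ne hij.symm))

end Matrix

section ClockShift

variable {R : Type*} [CommSemiring R] {m : Type*} [Fintype m] [DecidableEq m]

/-- The clock matrix `diag(1, ω, …, ωⁿ⁻¹)`, the normal form of `A`. -/
def clockMatrix (n : ℕ) (ω : R) : Matrix (Fin n) (Fin n) R :=
  diagonal fun j ↦ ω ^ (j : ℕ)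

variable (R) in
/-- The cyclic shift matrix, sending the `k`-th basis vector to the one of index `k + 1` modulo
`n`; the normal form of `B`. -/
def shiftMatrix (n : ℕ) : Matrix (Fin n) (Fin n) R :=
  of fun j k ↦ if (j : ℕ) % n = ((k : ℕ) + 1) % n then 1 else 0

/-- The Krylov matrix with columns `u, B u, …, Bⁿ⁻¹ u`. For a unit eigenvector `u` of `A` it is the
change of basis to the clock and shift matrices. -/
def krylovMatrix (B : Matrix m m R) (u : m → R) (n : ℕ) : Matrix m (Fin n) R :=
  of fun j k ↦ (B ^ (k : ℕ) *ᵥ u) j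

theorem isStarNormal_clockMatrix [StarRing R] {n : ℕ} {ω : R} :
    IsStarNormal (clockMatrix n ω) := by
  refine ⟨?_⟩
  rw [clockMatrix, star_eq_conjTranspose, diagonal_conjTranspose]
  exact commute_diagonal _ _

variable {A B : Matrix m m R} {u : m → R} {n : ℕ}

theorem mul_krylovMatrix_apply (M B : Matrix m m R) (u : m → R) (j : m) (k : Fin n) :
    (M * krylovMatrix B u n) j k = ((M * B ^ (k : ℕ)) *ᵥ u) j := by
  rw [← mulVec_mulVec]
  rfl

theorem mul_krylovMatrix_eq_mul_clockMatrix {ω : R} (hAB : A * B = ω • (B * A))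
    (hu : A *ᵥ u = u) : A * krylovMatrix B u n = krylovMatrix B u n * clockMatrix n ω := by
  have hAB_pow (k : ℕ) : A * B ^ k = ω ^ k • (B ^ k * A) := by
    have h : SemiconjBy A B (ω • B) := hAB.trans (smul_mul_assoc ω B A).symm
    simpa only [smul_pow, smul_mul_assoc] using (h.pow_right k).eq
  ext j k
  rw [mul_krylovMatrix_apply, hAB_pow, smul_mulVec, ← mulVec_mulVec, hu, clockMatrix, mul_diagonal,
    mul_comm]
  rfl

theorem mul_krylovMatrix_eq_mul_shiftMatrix (hB : B ^ n = 1) :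
    B * krylovMatrix B u n = krylovMatrix B u n * shiftMatrix R n := by
  ext j k
  let next : Fin n := ⟨(k + 1) % n, Nat.mod_lt _ k.pos⟩
  have shift_apply (i : Fin n) : shiftMatrix R n i k = if i = next then 1 else 0 := by
    simp only [shiftMatrix, of_apply, Nat.mod_eq_of_lt i.isLt, Fin.ext_iff, next]
  rw [mul_krylovMatrix_apply, ← pow_succ', pow_eq_pow_mod _ hB, mul_apply]
  simp only [shift_apply, mul_ite, mul_one, mul_zero, Finset.sum_ite_eq', Finset.mem_univ, if_true]
  rfl

end ClockShift

section WeylPair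

variable {n : ℕ} {ω : ℂ} {A B : Matrix (Fin n) (Fin n) ℂ}

open scoped Matrix.Norms.L2Operator in
theorem conjTranspose_mul_self_eq_one_of_mul_eq_mul_clockMatrix {V : Matrix (Fin n) (Fin n) ℂ}
    (hω : IsPrimitiveRoot ω n) [hA : IsStarNormal A] (hV : A * V = V * clockMatrix n ω)
    (hV_diag : ∀ k, (Vᴴ * V) k k = 1) : Vᴴ * V = 1 := by
  have h_inj : Function.Injective fun j : Fin n ↦ ω ^ (j : ℕ) := fun i j hij ↦
    Fin.ext (hω.pow_inj i.isLt j.isLt hij)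
  have h_isDiag : (Vᴴ * V).IsDiag :=
    isDiag_of_commute_diagonal h_inj
      (commute_star_mul_self_of_semiconjBy hA isStarNormal_clockMatrix hV.symm)
  rw [← h_isDiag.diagonal_diag, ← diagonal_one]
  exact congrArg diagonal (funext hV_diag)

theorem exists_unitary_conj_eq_clockMatrix_shiftMatrix (hω : IsPrimitiveRoot ω n) [IsStarNormal A]
    (hA : 1 ∈ spectrum ℂ A) (hB : B ∈ unitary (Matrix (Fin n) (Fin n) ℂ)) (hB_pow : B ^ n = 1)
    (hAB : A * B = ω • (B * A)) :
    ∃ U : Matrix (Fin n) (Fin n) ℂ, U * Uᴴ = 1 ∧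
      U * A * Uᴴ = clockMatrix n ω ∧ U * B * Uᴴ = shiftMatrix ℂ n := by
  obtain ⟨u, hu_norm, hu⟩ := exists_unit_eigenvector_of_mem_spectrum hA
  rw [one_smul] at hu
  let V := krylovMatrix B u n
  have hAV : A * V = V * clockMatrix n ω := mul_krylovMatrix_eq_mul_clockMatrix hAB hu
  have hBV : B * V = V * shiftMatrix ℂ n := mul_krylovMatrix_eq_mul_shiftMatrix hB_pow
  have hV_diag (k : Fin n) : (Vᴴ * V) k k = 1 :=
    (star_mulVec_dotProduct_mulVec_of_mem_unitary (pow_mem hB k) u u).trans hu_norm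
  have hV : Vᴴ * V = 1 := conjTranspose_mul_self_eq_one_of_mul_eq_mul_clockMatrix hω hAV hV_diag
  refine ⟨Vᴴ, ?_, ?_, ?_⟩ <;> rw [conjTranspose_conjTranspose]
  · exact hV
  · rw [mul_assoc, hAV, ← mul_assoc, hV, one_mul]
  · rw [mul_assoc, hBV, ← mul_assoc, hV, one_mul]

end WeylPair

open scoped Matrix.Norms.L2Operator in
theorem stmt_15_general {n : ℕ} (hn : n ≠ 0) {ω : ℂ} (hω : IsPrimitiveRoot ω n)
    {A B : Matrix (Fin n) (Fin n) ℂ} [IsStarNormal A]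
    (hB : ‖Matrix.toEuclideanCLM (𝕜 := ℂ) B‖ ≤ 1)
    (hspec : ∀ x y z₁ z₂ : ℂ, x ^ n + y ^ n + (-1 : ℂ) ^ (n - 1) * (ω * z₁ + z₂) ^ n = 1 →
      (x • A + y • B + z₁ • (A * B) + z₂ • (B * A) - 1).det = 0) :
    ∃ U : Matrix (Fin n) (Fin n) ℂ, U * Uᴴ = 1 ∧
      U * A * Uᴴ = clockMatrix n ω ∧ U * B * Uᴴ = shiftMatrix ℂ n := by
  have h_card : (Fintype.card (Fin n) : ℂ) ≠ 0 := by simpa using hn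
  have hA_det (s : ℂ) (hs : s ^ n = 1) : (s • A - 1).det = 0 := by
    simpa using hspec s 0 0 0 (by simpa [hn] using hs)
  have hB_det (s : ℂ) (hs : s ^ n = 1) : (s • B - 1).det = 0 := by
    simpa using hspec 0 s 0 0 (by simpa [hn] using hs)
  have hA_pow : A ^ n = 1 := by
    simpa using pow_card_eq_smul_one_of_det_smul_sub_one_eq_zero h_card one_ne_zero (by simpa)
  have hB_pow : B ^ n = 1 := by
    simpa using pow_card_eq_smul_one_of_det_smul_sub_one_eq_zero h_card one_ne_zero (by simpa)
  have hB_norm : ‖B‖ ≤ 1 := by rwa [cstar_norm_def]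
  have hA_unitary := mem_unitary_of_isStarNormal_of_pow_eq_one hn hA_pow
  have hB_unitary := mem_unitary_of_norm_le_one_of_pow_eq_one hB_norm hn hB_pow
  have hAB : A * B = ω • (B * A) := by
    refine eq_smul_of_forall_ne_isUnit_sub_smul (mul_mem hA_unitary hB_unitary)
      (mul_mem hB_unitary hA_unitary) fun μ hμ ↦ ?_
    refine isUnit_sub_smul_of_det_pencil_eq_zero h_card (ε := (-1) ^ (n - 1)) (by simp)
      (fun z₁ z₂ hz ↦ ?_) hμ
    simpa using hspec 0 0 z₁ z₂ (by simpa [hn] using hz)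
  have hA_one : 1 ∈ spectrum ℂ A := by
    simpa using (det_smul_sub_one_eq_zero_iff_inv_mem_spectrum one_ne_zero).1 (hA_det 1 (one_pow n))
  exact exists_unitary_conj_eq_clockMatrix_shiftMatrix hω hA_one hB_unitary hB_pow hAB

theorem stmt_15 (n : ℕ) (hn : 2 ≤ n)
    (ω : ℂ) (hω : ω = Complex.exp (2 * Real.pi * Complex.I / n))
    (Aₙ Bhat : Matrix (Fin n) (Fin n) ℂ)
    (hAₙ : Aₙ = Matrix.diagonal (fun j : Fin n => ω ^ (j : ℕ)))
    (hBhat : Bhat = Matrix.of fun j k : Fin n =>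
      if (j : ℕ) % n = ((k : ℕ) + 1) % n then 1 else 0)
    (A B : Matrix (Fin n) (Fin n) ℂ)
    (hA : A * Aᴴ = Aᴴ * A)
    (hB : ‖Matrix.toEuclideanCLM (𝕜 := ℂ) B‖ = 1)
    (hspec : {p : ℂ × ℂ × ℂ × ℂ |
        (p.1 • A + p.2.1 • B + p.2.2.1 • (A * B) + p.2.2.2 • (B * A) - 1).det = 0} =
      {p : ℂ × ℂ × ℂ × ℂ |
        p.1 ^ n + p.2.1 ^ n + (-1 : ℂ) ^ (n - 1) * (ω * p.2.2.1 + p.2.2.2) ^ n = 1}) :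
    ∃ U : Matrix (Fin n) (Fin n) ℂ, U * Uᴴ = 1 ∧
      U * A * Uᴴ = Aₙ ∧ U * B * Uᴴ = Bhat := by
  have : IsStarNormal A := ⟨hA.symm⟩
  subst hω hAₙ hBhat
  exact stmt_15_general (by omega) (isPrimitiveRoot_exp n (by omega)) hB.le
    fun x y z₁ z₂ ↦ (Set.ext_iff.1 hspec (x, y, z₁, z₂)).2
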